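/- If the Ellis enveloping semigroup E(Ω,φ) is metrizable, then for every Q ∈ L there exists an ergodic sequence (T_k) of operators from the convex hull of {V^n : n ≥ 0} that converges to Q in the weak* operator topology, i.e. ⟨x, T_k μ⟩ → ⟨x, Qμ⟩ for all x ∈ C(Ω,ℝ) and μ ∈ X*. -/

import Mathlib

open MeasureTheory Filter Topology

/-- The pairing `⟨f, μ⟩ = ∫ f dμ` of a function with a finite signed Borel measure,
defined via the Jordan decomposition of the signed measure. -/
noncomputable def spair {Ω : Type*} [MeasurableSpace Ω] (f : Ω → ℝ) (μ : SignedMeasure Ω) : ℝ :=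
  (∫ ω, f ω ∂μ.toJordanDecomposition.posPart) - (∫ ω, f ω ∂μ.toJordanDecomposition.negPart)

/-- The weak* topology on the space `X*` of finite signed Borel measures, i.e. the topology
of convergence of the pairings with all continuous functions `x ∈ C(Ω, ℝ)`. With this topology
on the codomain, the product topology on `SignedMeasure Ω → SignedMeasure Ω` is precisely the
weak* operator topology (pointwise convergence with `X*` in its weak* topology). -/
noncomputable instance weakStarTopology {Ω : Type*} [TopologicalSpace Ω] [MeasurableSpace Ω] :
    TopologicalSpace (SignedMeasure Ω) :=
  TopologicalSpace.induced (fun μ => fun x : C(Ω, ℝ) => spair (⇑x) μ) inferInstance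

/-- The operator `V : X* → X*`, pushforward by `φ`: `(Vμ)(e) = μ(φ⁻¹ e)`. -/
noncomputable def Vop {Ω : Type*} [MeasurableSpace Ω] (φ : Ω → Ω) :
    SignedMeasure Ω → SignedMeasure Ω :=
  fun μ => μ.map φ

/-- The Dirac measure at `ω`, as a signed measure. -/
noncomputable def diracSM {Ω : Type*} [MeasurableSpace Ω] (ω : Ω) : SignedMeasure Ω :=
  (Measure.dirac ω).toSignedMeasure

/-- `Γ(Ω,φ)`: the closure of `{Vⁿ : n ≥ 0}` in the weak* operator topology. -/
def GammaSG {Ω : Type*} [TopologicalSpace Ω] [MeasurableSpace Ω] (φ : Ω → Ω) :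
    Set (SignedMeasure Ω → SignedMeasure Ω) :=
  closure (Set.range fun n : ℕ => (Vop φ)^[n])

/-- `G(Ω,φ)`: the closure of the convex hull of `{Vⁿ : n ≥ 0}` in the weak* operator topology. -/
def GSG {Ω : Type*} [TopologicalSpace Ω] [MeasurableSpace Ω] (φ : Ω → Ω) :
    Set (SignedMeasure Ω → SignedMeasure Ω) :=
  closure (convexHull ℝ (Set.range fun n : ℕ => (Vop φ)^[n]))

/-- The kernel `L = {Q ∈ G(Ω,φ) : V ∘ Q = Q}` of the semigroup `G(Ω,φ)`. -/
def Lker {Ω : Type*} [TopologicalSpace Ω] [MeasurableSpace Ω] (φ : Ω → Ω) :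
    Set (SignedMeasure Ω → SignedMeasure Ω) :=
  {Q ∈ GSG φ | Vop φ ∘ Q = Q}

/-- The Ellis enveloping semigroup `E(Ω,φ)`: the closure of the iterates `{φⁿ : n ≥ 0}`
in the product topology (pointwise convergence) on `Ω → Ω`. -/
def EllisE {Ω : Type*} [TopologicalSpace Ω] (φ : Ω → Ω) : Set (Ω → Ω) :=
  closure (Set.range fun n : ℕ => φ^[n])

/-- `E_b(Ω,φ)`: the smallest set of self-maps of `Ω` containing the iterates `{φⁿ : n ≥ 0}`
and sequentially closed under pointwise convergence. -/
inductive Eb {Ω : Type*} [TopologicalSpace Ω] (φ : Ω → Ω) : (Ω → Ω) → Prop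
  | iterate (n : ℕ) : Eb φ φ^[n]
  | lim (p : ℕ → Ω → Ω) (q : Ω → Ω) (hp : ∀ k, Eb φ (p k))
      (hq : ∀ ω, Tendsto (fun k => p k ω) atTop (𝓝 (q ω))) : Eb φ q

/-- `E₁(Ω,φ)`: the set of pointwise limits of sequences of iterates `φ^{n_k}`. -/
def E1SG {Ω : Type*} [TopologicalSpace Ω] (φ : Ω → Ω) : Set (Ω → Ω) :=
  {p | ∃ n : ℕ → ℕ, ∀ ω, Tendsto (fun k => φ^[n k] ω) atTop (𝓝 (p ω))}

/-- An operator `P ∈ Γ(Ω,φ)` with `p = πP` is regular if `p` is Borel measurable and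
`(Pμ)(e) = μ(p⁻¹ e)` for every Borel probability measure `μ` and Borel set `e`. -/
def RegularOperator {Ω : Type*} [TopologicalSpace Ω] [MeasurableSpace Ω]
    (P : SignedMeasure Ω → SignedMeasure Ω) (p : Ω → Ω) : Prop :=
  Measurable p ∧ ∀ (μ : Measure Ω) [IsProbabilityMeasure μ],
    ∀ e : Set Ω, MeasurableSet e → P μ.toSignedMeasure e = (μ (p ⁻¹' e)).toReal

/-- A minimal set of the semicascade `(Ω,φ)`: a nonempty closed `φ`-invariant set containing
no proper nonempty closed `φ`-invariant subset. -/
def IsMinimalSet {Ω : Type*} [TopologicalSpace Ω] (φ : Ω → Ω) (m : Set Ω) : Prop :=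
  m.Nonempty ∧ IsClosed m ∧ Set.MapsTo φ m m ∧
    ∀ m' ⊆ m, m'.Nonempty → IsClosed m' → Set.MapsTo φ m' m' → m' = m

/-- The orbit closure of a point `ω`: the closure of the trajectory `{φⁿ ω : n ≥ 0}`. -/
def orbitClosure {Ω : Type*} [TopologicalSpace Ω] (φ : Ω → Ω) (ω : Ω) : Set Ω :=
  closure (Set.range fun n : ℕ => φ^[n] ω)

/-- A `φ`-ergodic measure: a `φ`-invariant Borel probability measure `μ` such that
`μ(e) ∈ {0,1}` for every Borel set `e` with `φ⁻¹ e = e`. -/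
def IsErgodicMeasure {Ω : Type*} [MeasurableSpace Ω] (φ : Ω → Ω) (μ : Measure Ω) : Prop :=
  IsProbabilityMeasure μ ∧ (∀ e : Set Ω, MeasurableSet e → μ (φ ⁻¹' e) = μ e) ∧
    (∀ e : Set Ω, MeasurableSet e → φ ⁻¹' e = e → μ e = 0 ∨ μ e = 1)

/-- The support of a Borel measure: the smallest closed set of full measure
(the intersection of all closed sets of full measure). -/
def msupp {Ω : Type*} [TopologicalSpace Ω] [MeasurableSpace Ω] (μ : Measure Ω) : Set Ω :=
  ⋂₀ {s : Set Ω | IsClosed s ∧ μ sᶜ = 0}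

/-- The semicascade `(Ω,φ)` is tame: for every continuous `x` and every strictly increasing
sequence `n(1) < n(2) < ⋯`, the infimum over finitely supported real coefficients `a` with
`Σ|aₖ| = 1` of the sup-norms `‖Σₖ aₖ · (x ∘ φ^{n(k)})‖` is `0`. -/
def Tame {Ω : Type*} [TopologicalSpace Ω] [CompactSpace Ω] (φ : Ω → Ω)
    (hφ : Continuous φ) : Prop :=
  ∀ (x : C(Ω, ℝ)) (n : ℕ → ℕ), StrictMono n →
    sInf {r : ℝ | ∃ a : ℕ →₀ ℝ, (∑ k ∈ a.support, |a k|) = 1 ∧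
      r = ‖∑ k ∈ a.support, a k • x.comp ⟨φ^[n k], hφ.iterate (n k)⟩‖} = 0

/-- Points `a, b` are proximal: `inf_{n ≥ 0} d(φⁿ a, φⁿ b) = 0`. -/
def Proximal {Ω : Type*} [PseudoMetricSpace Ω] (φ : Ω → Ω) (a b : Ω) : Prop :=
  (⨅ n : ℕ, dist (φ^[n] a) (φ^[n] b)) = 0

section Helpers

theorem spair_eq_of_sub {Ω : Type*} [MeasurableSpace Ω] (μ : SignedMeasure Ω) (α β : Measure Ω)
    [IsFiniteMeasure α] [IsFiniteMeasure β] (h : μ = α.toSignedMeasure - β.toSignedMeasure)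
    (f : Ω → ℝ) (hf : ∀ ν : Measure Ω, IsFiniteMeasure ν → Integrable f ν) :
    spair f μ = (∫ ω, f ω ∂α) - ∫ ω, f ω ∂β := by
  have h0 : μ.toJordanDecomposition.posPart.toSignedMeasure
      - μ.toJordanDecomposition.negPart.toSignedMeasure = μ :=
    SignedMeasure.toSignedMeasure_toJordanDecomposition μ
  have h1 : (μ.toJordanDecomposition.posPart + β).toSignedMeasure
      = (α + μ.toJordanDecomposition.negPart).toSignedMeasure := by
    rw [Measure.toSignedMeasure_add, Measure.toSignedMeasure_add]
    have h2 := h0.trans h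
    rw [sub_eq_sub_iff_add_eq_add] at h2
    exact h2
  rw [Measure.toSignedMeasure_eq_toSignedMeasure_iff] at h1
  have h3 : (∫ ω, f ω ∂(μ.toJordanDecomposition.posPart + β))
      = ∫ ω, f ω ∂(α + μ.toJordanDecomposition.negPart) := by rw [h1]
  rw [integral_add_measure (hf _ inferInstance) (hf _ inferInstance),
    integral_add_measure (hf _ inferInstance) (hf _ inferInstance)] at h3
  unfold spair
  linarith

theorem jordan_eq {Ω : Type*} [MeasurableSpace Ω] (μ : SignedMeasure Ω) :
    μ = μ.toJordanDecomposition.posPart.toSignedMeasure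
      - μ.toJordanDecomposition.negPart.toSignedMeasure :=
  (SignedMeasure.toSignedMeasure_toJordanDecomposition μ).symm

theorem spair_add {Ω : Type*} [MeasurableSpace Ω] (μ ν : SignedMeasure Ω)
    (f : Ω → ℝ) (hf : ∀ ν : Measure Ω, IsFiniteMeasure ν → Integrable f ν) :
    spair f (μ + ν) = spair f μ + spair f ν := by
  rw [spair_eq_of_sub (μ + ν)
    (μ.toJordanDecomposition.posPart + ν.toJordanDecomposition.posPart)
    (μ.toJordanDecomposition.negPart + ν.toJordanDecomposition.negPart) ?_ f hf,
    integral_add_measure (hf _ inferInstance) (hf _ inferInstance),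
    integral_add_measure (hf _ inferInstance) (hf _ inferInstance)]
  · unfold spair
    ring
  · rw [Measure.toSignedMeasure_add, Measure.toSignedMeasure_add]
    conv_lhs => rw [jordan_eq μ, jordan_eq ν]
    abel

theorem spair_smul {Ω : Type*} [MeasurableSpace Ω] (μ : SignedMeasure Ω) (a : ℝ) (ha : 0 ≤ a)
    (f : Ω → ℝ) (hf : ∀ ν : Measure Ω, IsFiniteMeasure ν → Integrable f ν) :
    spair f (a • μ) = a * spair f μ := by
  lift a to NNReal using ha
  rw [spair_eq_of_sub ((a : ℝ) • μ) (a • μ.toJordanDecomposition.posPart)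
    (a • μ.toJordanDecomposition.negPart) ?_ f hf,
    integral_smul_nnreal_measure, integral_smul_nnreal_measure]
  · unfold spair
    simp only [NNReal.smul_def, smul_eq_mul]
    ring
  · rw [Measure.toSignedMeasure_smul, Measure.toSignedMeasure_smul]
    conv_lhs => rw [jordan_eq μ]
    exact smul_sub (a : ℝ) _ _

theorem integrable_cont {Ω : Type*} [TopologicalSpace Ω] [CompactSpace Ω] [MeasurableSpace Ω]
    [BorelSpace Ω] (x : C(Ω, ℝ)) (ν : Measure Ω) (hν : IsFiniteMeasure ν) :
    Integrable (⇑x) ν := by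
  refine Integrable.of_bound (C := ‖x‖) x.continuous.measurable.aestronglyMeasurable ?_
  exact Filter.Eventually.of_forall fun ω => x.norm_coe_le_norm ω

theorem spair_Vop {Ω : Type*} [TopologicalSpace Ω] [CompactSpace Ω] [MeasurableSpace Ω]
    [BorelSpace Ω] (φ : C(Ω, Ω)) (x : C(Ω, ℝ)) (μ : SignedMeasure Ω) :
    spair (⇑x) (Vop φ μ) = spair (⇑(x.comp φ)) μ := by
  have hm : Measurable φ := φ.continuous.measurable
  rw [spair_eq_of_sub (Vop φ μ) (μ.toJordanDecomposition.posPart.map φ)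
    (μ.toJordanDecomposition.negPart.map φ) ?_ x (integrable_cont x),
    integral_map hm.aemeasurable x.continuous.measurable.aestronglyMeasurable,
    integral_map hm.aemeasurable x.continuous.measurable.aestronglyMeasurable]
  · rfl
  · ext s hs
    unfold Vop
    conv_lhs => rw [jordan_eq μ]
    rw [VectorMeasure.map_apply _ hm hs]
    simp only [VectorMeasure.sub_apply]
    rw [Measure.toSignedMeasure_apply_measurable (hm hs),
      Measure.toSignedMeasure_apply_measurable (hm hs),
      Measure.toSignedMeasure_apply_measurable hs,
      Measure.toSignedMeasure_apply_measurable hs]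
    simp only [Measure.real, Measure.map_apply hm hs]

theorem spair_Vop_iter {Ω : Type*} [TopologicalSpace Ω] [CompactSpace Ω] [MeasurableSpace Ω]
    [BorelSpace Ω] (φ : C(Ω, Ω)) (n : ℕ) (x : C(Ω, ℝ)) (μ : SignedMeasure Ω) :
    spair (⇑x) ((Vop φ)^[n] μ) = spair (fun ω => x (φ^[n] ω)) μ := by
  induction n generalizing μ x with
  | zero => rfl
  | succ n ih =>
    rw [Function.iterate_succ_apply', spair_Vop, ih]
    congr 1
    ext ω
    rw [Function.iterate_succ_apply']
    rfl

theorem continuous_ev {Ω : Type*} [TopologicalSpace Ω] [MeasurableSpace Ω]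
    (x : C(Ω, ℝ)) (μ : SignedMeasure Ω) :
    Continuous fun T : SignedMeasure Ω → SignedMeasure Ω => spair (⇑x) (T μ) := by
  have h1 : Continuous fun ν : SignedMeasure Ω => fun x : C(Ω, ℝ) => spair (⇑x) ν :=
    continuous_induced_dom
  exact (continuous_apply x).comp (h1.comp (continuous_apply μ))

/-- Elements of a metrizable Ellis semigroup are Borel. -/
theorem ellis_measurable {Ω : Type*} [TopologicalSpace Ω] [TopologicalSpace.MetrizableSpace Ω]
    [MeasurableSpace Ω] [BorelSpace Ω] (φ : Ω → Ω) (hφ : Continuous φ)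
    (hmet : TopologicalSpace.MetrizableSpace (EllisE φ)) (p : EllisE φ) :
    Measurable (p : Ω → Ω) := by
  have hcl : p ∈ closure (Set.range fun n : ℕ =>
      (⟨φ^[n], subset_closure ⟨n, rfl⟩⟩ : EllisE φ)) := by
    rw [closure_subtype]
    have : (Subtype.val '' Set.range fun n : ℕ =>
      (⟨φ^[n], subset_closure ⟨n, rfl⟩⟩ : EllisE φ)) = Set.range fun n : ℕ => φ^[n] := by
      rw [← Set.range_comp]
      rfl
    rw [this]
    exact p.2
  rw [mem_closure_iff_seq_limit] at hcl
  obtain ⟨u, hu, hlim⟩ := hcl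
  refine measurable_of_tendsto_metrizable (f := fun k => (u k : Ω → Ω)) ?_ ?_
  · intro k
    obtain ⟨n, hn⟩ := hu k
    rw [← hn]
    exact (hφ.iterate n).measurable
  · exact (continuous_subtype_val.tendsto p).comp hlim

theorem ellis_integral_cont {Ω : Type*} [TopologicalSpace Ω] [CompactSpace Ω]
    [TopologicalSpace.MetrizableSpace Ω]
    [MeasurableSpace Ω] [BorelSpace Ω] (φ : Ω → Ω) (hφ : Continuous φ)
    (hmet : TopologicalSpace.MetrizableSpace (EllisE φ)) (x : C(Ω, ℝ))
    (ν : Measure Ω) [IsFiniteMeasure ν] :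
    Continuous fun p : EllisE φ => ∫ ω, x ((p : Ω → Ω) ω) ∂ν := by
  rw [← continuousOn_univ]
  refine continuousOn_univ.2 ?_
  rw [continuous_iff_seqContinuous]
  intro u p hu
  refine tendsto_integral_of_dominated_convergence (fun _ => ‖x‖) ?_ (integrable_const _) ?_ ?_
  · intro k
    exact (x.continuous.measurable.comp
      (ellis_measurable φ hφ hmet (u k))).aestronglyMeasurable
  · intro k
    exact Filter.Eventually.of_forall fun ω => x.norm_coe_le_norm _
  · refine Filter.Eventually.of_forall fun ω => ?_
    have h1 : Tendsto (fun k => (u k : Ω → Ω)) atTop (𝓝 (p : Ω → Ω)) :=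
      (continuous_subtype_val.tendsto p).comp hu
    exact (x.continuous.tendsto _).comp ((tendsto_pi_nhds.1 h1) ω)

/-- The function `p ↦ ⟨x ∘ p, μ⟩` on the Ellis semigroup. -/
noncomputable def ellisF {Ω : Type*} [TopologicalSpace Ω] [CompactSpace Ω]
    [TopologicalSpace.MetrizableSpace Ω]
    [MeasurableSpace Ω] [BorelSpace Ω] (φ : Ω → Ω) (hφ : Continuous φ)
    (hmet : TopologicalSpace.MetrizableSpace (EllisE φ))
    (z : C(Ω, ℝ) × SignedMeasure Ω) : C(EllisE φ, ℝ) :=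
  ⟨fun p => spair (fun ω => z.1 ((p : Ω → Ω) ω)) z.2,
    (ellis_integral_cont φ hφ hmet z.1 _).sub (ellis_integral_cont φ hφ hmet z.1 _)⟩

theorem spair_comb {Ω : Type*} [TopologicalSpace Ω] [CompactSpace Ω] [MeasurableSpace Ω]
    [BorelSpace Ω] (x : C(Ω, ℝ)) (μ : SignedMeasure Ω) (T S : SignedMeasure Ω → SignedMeasure Ω)
    (a b : ℝ) (ha : 0 ≤ a) (hb : 0 ≤ b) :
    spair (⇑x) ((a • T + b • S) μ) = a * spair (⇑x) (T μ) + b * spair (⇑x) (S μ) := by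
  rw [Pi.add_apply, Pi.smul_apply, Pi.smul_apply, spair_add _ _ _ (integrable_cont x),
    spair_smul _ _ ha _ (integrable_cont x), spair_smul _ _ hb _ (integrable_cont x)]

theorem key_bound {Ω : Type*} [TopologicalSpace Ω] [CompactSpace Ω]
    [TopologicalSpace.MetrizableSpace Ω]
    [MeasurableSpace Ω] [BorelSpace Ω] (φ : Ω → Ω) (hφ : Continuous φ)
    (hmet : TopologicalSpace.MetrizableSpace (EllisE φ)) [CompactSpace (EllisE φ)]
    (z w : C(Ω, ℝ) × SignedMeasure Ω)
    (T : SignedMeasure Ω → SignedMeasure Ω)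
    (hT : T ∈ GSG φ) :
    |spair (⇑z.1) (T z.2) - spair (⇑w.1) (T w.2)|
      ≤ dist (ellisF φ hφ hmet z) (ellisF φ hφ hmet w) := by
  set c := dist (ellisF φ hφ hmet z) (ellisF φ hφ hmet w) with hc
  have hclosed : IsClosed {T : SignedMeasure Ω → SignedMeasure Ω |
      |spair (⇑z.1) (T z.2) - spair (⇑w.1) (T w.2)| ≤ c} :=
    isClosed_le ((continuous_ev z.1 z.2).sub (continuous_ev w.1 w.2)).abs continuous_const
  have hsub : convexHull ℝ (Set.range fun n : ℕ => (Vop φ)^[n]) ⊆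
      {T : SignedMeasure Ω → SignedMeasure Ω |
      |spair (⇑z.1) (T z.2) - spair (⇑w.1) (T w.2)| ≤ c} := by
    refine convexHull_min ?_ ?_
    · rintro _ ⟨n, rfl⟩
      have h1 := spair_Vop_iter ⟨φ, hφ⟩ n z.1 z.2
      have h2 := spair_Vop_iter ⟨φ, hφ⟩ n w.1 w.2
      simp only [ContinuousMap.coe_mk] at h1 h2
      simp only [Set.mem_setOf_eq]
      rw [h1, h2, ← Real.dist_eq]
      exact ContinuousMap.dist_apply_le_dist
        (f := ellisF φ hφ hmet z) (g := ellisF φ hφ hmet w) ⟨φ^[n], subset_closure ⟨n, rfl⟩⟩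
    · intro T hT S hS a b ha hb hab
      simp only [Set.mem_setOf_eq] at hT hS ⊢
      rw [spair_comb _ _ _ _ _ _ ha hb, spair_comb _ _ _ _ _ _ ha hb]
      rw [abs_le] at hT hS ⊢
      have e : b = 1 - a := by linarith
      subst e
      constructor <;> nlinarith
  exact closure_minimal hsub hclosed hT

theorem comm_conv {Ω : Type*} [TopologicalSpace Ω] [CompactSpace Ω]
    [MeasurableSpace Ω] [BorelSpace Ω] (φ : C(Ω, Ω)) (x : C(Ω, ℝ)) (μ : SignedMeasure Ω)
    (T : SignedMeasure Ω → SignedMeasure Ω)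
    (hT : T ∈ convexHull ℝ (Set.range fun n : ℕ => (Vop φ)^[n])) :
    spair (⇑x) (T (Vop φ μ)) = spair (⇑(x.comp φ)) (T μ) := by
  have hsub : convexHull ℝ (Set.range fun n : ℕ => (Vop φ)^[n]) ⊆
      {T : SignedMeasure Ω → SignedMeasure Ω |
        spair (⇑x) (T (Vop φ μ)) = spair (⇑(x.comp φ)) (T μ)} := by
    refine convexHull_min ?_ ?_
    · rintro _ ⟨n, rfl⟩
      simp only [Set.mem_setOf_eq]
      rw [← spair_Vop, ← Function.iterate_succ_apply, Function.iterate_succ_apply']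
    · intro T hT S hS a b ha hb hab
      simp only [Set.mem_setOf_eq] at hT hS ⊢
      rw [spair_comb _ _ _ _ _ _ ha hb, spair_comb _ _ _ _ _ _ ha hb, hT, hS]
  exact hsub hT

theorem exists_seq_approx {Ω : Type*} [TopologicalSpace Ω] [CompactSpace Ω]
    [TopologicalSpace.MetrizableSpace Ω]
    [MeasurableSpace Ω] [BorelSpace Ω] (φ : Ω → Ω) (hφ : Continuous φ)
    (hmet : TopologicalSpace.MetrizableSpace (EllisE φ))
    (Q : SignedMeasure Ω → SignedMeasure Ω) (hQ : Q ∈ GSG φ) :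
    ∃ T : ℕ → SignedMeasure Ω → SignedMeasure Ω,
      (∀ k, T k ∈ convexHull ℝ (Set.range fun n : ℕ => (Vop φ)^[n])) ∧
      (∀ (x : C(Ω, ℝ)) (μ : SignedMeasure Ω),
        Tendsto (fun k => spair (⇑x) (T k μ)) atTop (𝓝 (spair (⇑x) (Q μ)))) := by
  haveI : CompactSpace (EllisE φ) := isCompact_iff_compactSpace.1 isClosed_closure.isCompact
  letI := TopologicalSpace.metrizableSpaceMetric (EllisE φ)
  haveI : SecondCountableTopology (EllisE φ) := inferInstance
  set F := ellisF φ hφ hmet with hF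
  haveI : Nonempty (Set.range F) := ⟨⟨F (0, 0), Set.mem_range_self _⟩⟩
  have hd := TopologicalSpace.denseRange_denseSeq (Set.range F)
  set d := TopologicalSpace.denseSeq (Set.range F)
  choose z hz using fun i => (d i).2
  have hex : ∀ k : ℕ, ∃ T ∈ convexHull ℝ (Set.range fun n : ℕ => (Vop φ)^[n]),
      ∀ i ∈ Set.Iic k, |spair (⇑(z i).1) (T (z i).2) - spair (⇑(z i).1) (Q (z i).2)|
        < 1 / ((k : ℝ) + 1) := by
    intro k
    have hev : ∀ᶠ T in 𝓝 Q, ∀ i ∈ Set.Iic k,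
        |spair (⇑(z i).1) (T (z i).2) - spair (⇑(z i).1) (Q (z i).2)|
        < 1 / ((k : ℝ) + 1) := by
      rw [Filter.eventually_all_finite (Set.finite_Iic k)]
      intro i _
      have h1 := (continuous_ev (z i).1 (z i).2).tendsto Q
      have h2 := Metric.tendsto_nhds.1 h1 (1 / ((k : ℝ) + 1)) (by positivity)
      simpa only [Real.dist_eq] using h2
    obtain ⟨T, h1, h2⟩ := ((mem_closure_iff_frequently.1 hQ).and_eventually hev).exists
    exact ⟨T, h1, h2⟩
  choose T hT1 hT2 using hex
  refine ⟨T, hT1, fun x μ => ?_⟩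
  rw [Metric.tendsto_atTop]
  intro ε hε
  obtain ⟨i, hi⟩ := hd.exists_dist_lt ⟨F (x, μ), Set.mem_range_self _⟩ (ε := ε / 3) (by positivity)
  have hi' : dist (F (x, μ)) (F (z i)) < ε / 3 := by
    rw [hz i]
    exact hi
  obtain ⟨N, hN⟩ := exists_nat_one_div_lt (show (0 : ℝ) < ε / 3 by positivity)
  refine ⟨max N i, fun k hk => ?_⟩
  have hkN : N ≤ k := le_trans (le_max_left _ _) hk
  have hki : i ≤ k := le_trans (le_max_right _ _) hk
  have b1 := key_bound φ hφ hmet (x, μ) (z i) (T k) (subset_closure (hT1 k))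
  have b2 := key_bound φ hφ hmet (x, μ) (z i) Q hQ
  have b3 := hT2 k i hki
  have b4 : 1 / ((k : ℝ) + 1) ≤ 1 / ((N : ℝ) + 1) := by
    apply one_div_le_one_div_of_le (by positivity)
    have : (N : ℝ) ≤ k := by exact_mod_cast hkN
    linarith
  have b1' := lt_of_le_of_lt b1 hi'
  have b2' := lt_of_le_of_lt b2 hi'
  rw [Real.dist_eq]
  simp only [abs_lt] at b1' b2' b3 ⊢
  constructor <;> linarith [b1'.1, b1'.2, b2'.1, b2'.2, b3.1, b3.2]

end Helpers

variable {Ω : Type*} [TopologicalSpace Ω] [CompactSpace Ω] [TopologicalSpace.MetrizableSpace Ω]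
  [Nonempty Ω] [MeasurableSpace Ω] [BorelSpace Ω]

/-- If `E(Ω,φ)` is metrizable (the semicascade is ordinary), then every `Q ∈ L` is the
weak* operator limit of an ergodic sequence of operators from the convex hull of
`{Vⁿ : n ≥ 0}`. -/
theorem stmt_12 (φ : Ω → Ω) (hφ : Continuous φ)
    (hmet : TopologicalSpace.MetrizableSpace (EllisE φ)) :
    ∀ Q ∈ Lker φ, ∃ T : ℕ → SignedMeasure Ω → SignedMeasure Ω,
      (∀ k, T k ∈ convexHull ℝ (Set.range fun n : ℕ => (Vop φ)^[n])) ∧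
      (∀ (x : C(Ω, ℝ)) (μ : SignedMeasure Ω),
        Tendsto (fun k => spair (⇑x) (T k μ) - spair (⇑x) (T k (Vop φ μ))) atTop (𝓝 0)) ∧
      (∀ (x : C(Ω, ℝ)) (μ : SignedMeasure Ω),
        Tendsto (fun k => spair (⇑x) (T k μ)) atTop (𝓝 (spair (⇑x) (Q μ)))) := by
  intro Q hQ
  obtain ⟨T, hT, hlim⟩ := exists_seq_approx φ hφ hmet Q hQ.1
  refine ⟨T, hT, fun x μ => ?_, hlim⟩
  have h1 : ∀ k, spair (⇑x) (T k (Vop φ μ)) = spair (⇑(x.comp ⟨φ, hφ⟩)) (T k μ) :=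
    fun k => comm_conv ⟨φ, hφ⟩ x μ (T k) (hT k)
  have h2 : spair (⇑(x.comp ⟨φ, hφ⟩)) (Q μ) = spair (⇑x) (Q μ) := by
    rw [← spair_Vop]
    exact congrArg (spair (⇑x)) (congrFun hQ.2 μ)
  have h3 := hlim (x.comp ⟨φ, hφ⟩) μ
  rw [h2] at h3
  have h4 := (hlim x μ).sub h3
  rw [sub_self] at h4
  simpa only [h1] using h4
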